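/- Let d ≥ 2, let E ⊂ ℝ^d be compact, and let μ be a Borel probability measure with support contained in E. If the Mattila integral M(μ) = ∫_0^∞ ( ∫_{S^{d−1}} |μ̂(rω)|² dσ(ω) )² r^{d−1} dr is finite, then the distance set Δ(E) = { |x−y| : x, y ∈ E } ⊂ ℝ has positive one-dimensional Lebesgue measure. -/

import Mathlib

open MeasureTheory Metric
open scoped ENNReal RealInnerProductSpace

/-- The Fourier transform `μ̂(ξ) = ∫ e^{-2πi x·ξ} dμ(x)` of a finite Borel measure on `ℝ^d`. -/
noncomputable def measureFT {d : ℕ} (μ : Measure (EuclideanSpace ℝ (Fin d)))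
    (ξ : EuclideanSpace ℝ (Fin d)) : ℂ :=
  ∫ x, Complex.exp (((-2 * Real.pi * ⟪x, ξ⟫ : ℝ) : ℂ) * Complex.I) ∂μ

/-!
Let `ρ` be the law of `x - y` for `x, y` independent of law `μ`, so that `ρ̂ = |μ̂|²`, and let `ν`
be the law of `|x - y| ω` with `ω` distributed over the sphere according to `σ`. By rotation
invariance of `σ`, `ν̂(ξ)` is the spherical average `∫ |μ̂(|ξ| ω)|² dσ(ω)`, and polar coordinates
turn the Mattila integral into `‖ν̂‖₂²`, up to a constant. A finite measure whose Fourier transform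
is square integrable is absolutely continuous: by Plancherel, testing it against a smooth bump
function that is `1` on a compact set `K` and lives on an open `U ⊇ K` gives
`ν(K) ≤ ‖ν̂‖₂ |U|^{1/2}`. So `ν`, and with it the law of `|x - y|`, does not charge null sets; but
the latter lives on `Δ(E)`.
-/

open Module (finrank)
open scoped FourierTransform SchwartzMap

section SurfaceMeasure

variable {E : Type*} [NormedAddCommGroup E] [InnerProductSpace ℝ E]

lemma natCast_finrank_orthogonal_span_singleton [FiniteDimensional ℝ E] {v : E} (hv : v ≠ 0) :
    (finrank ℝ (ℝ ∙ v)ᗮ : ℝ) = finrank ℝ E - 1 := by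
  have h := (ℝ ∙ v).finrank_add_finrank_orthogonal
  rw [finrank_span_singleton hv] at h
  rw [← h]
  push_cast
  ring

lemma ball_subset_orthogonalProjectionOnto_image_sphere {v : E} (hv : ‖v‖ = 1) :
    ball 0 1 ⊆ (ℝ ∙ v)ᗮ.orthogonalProjectionOnto '' sphere (0 : E) 1 := by
  intro w hw
  have hw1 : ‖w‖ ^ 2 ≤ 1 := pow_le_one₀ (norm_nonneg _) (mem_ball_zero_iff.1 hw).le
  have hwv : ⟪(w : E), v⟫ = 0 := by
    rw [real_inner_comm]
    exact Submodule.mem_orthogonal_singleton_iff_inner_right.1 w.2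
  refine ⟨w + √(1 - ‖w‖ ^ 2) • v, ?_, ?_⟩
  · rw [mem_sphere_zero_iff_norm, ← sq_eq_sq₀ (norm_nonneg _) zero_le_one, norm_add_sq_real,
      inner_smul_right, hwv, norm_smul, hv, Real.norm_of_nonneg (Real.sqrt_nonneg _), mul_one,
      Real.sq_sqrt (sub_nonneg.2 hw1), Submodule.coe_norm]
    ring
  · rw [map_add, map_smul, Submodule.orthogonalProjectionOnto_mem_subspace_eq_self,
      Submodule.orthogonalProjectionOnto_orthogonal_apply_eq_zero
        (Submodule.mem_span_singleton_self v), smul_zero, add_zero]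

variable [MeasurableSpace E] [BorelSpace E]

variable (E) in
/-- The surface measure on the unit sphere of `E`, as a measure on `E`. -/
noncomputable def surfaceMeasure : Measure E :=
  μH[(finrank ℝ E : ℝ) - 1].restrict (sphere 0 1)

lemma ae_norm_eq_one_surfaceMeasure : ∀ᵐ ω ∂surfaceMeasure E, ‖ω‖ = 1 := by
  filter_upwards [ae_restrict_mem isClosed_sphere.measurableSet] with ω hω
  exact mem_sphere_zero_iff_norm.1 hω

lemma measurePreserving_surfaceMeasure (e : E ≃ₗᵢ[ℝ] E) :
    MeasurePreserving e (surfaceMeasure E) (surfaceMeasure E) := by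
  have h := (e.toIsometryEquiv.measurePreserving_hausdorffMeasure
    ((finrank ℝ E : ℝ) - 1)).restrict_preimage (s := sphere 0 1) isClosed_sphere.measurableSet
  have h0 : e.toIsometryEquiv.symm 0 = 0 := map_zero e.symm
  rwa [e.toIsometryEquiv.preimage_sphere, h0] at h

variable [FiniteDimensional ℝ E]

theorem hausdorffMeasure_sphere_pos [Nontrivial E] :
    0 < μH[(finrank ℝ E : ℝ) - 1] (sphere (0 : E) 1) := by
  obtain ⟨v, hv⟩ := exists_norm_eq E zero_le_one
  rw [← natCast_finrank_orthogonal_span_singleton (norm_ne_zero_iff.1 (hv ▸ one_ne_zero))]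
  calc 0 < μH[(finrank ℝ (ℝ ∙ v)ᗮ : ℝ)] (ball (0 : (ℝ ∙ v)ᗮ) 1) :=
        measure_ball_pos _ _ one_pos
    _ ≤ μH[(finrank ℝ (ℝ ∙ v)ᗮ : ℝ)] ((ℝ ∙ v)ᗮ.orthogonalProjectionOnto '' sphere (0 : E) 1) :=
        measure_mono (ball_subset_orthogonalProjectionOnto_image_sphere hv)
    _ ≤ μH[(finrank ℝ (ℝ ∙ v)ᗮ : ℝ)] (sphere (0 : E) 1) :=
        hausdorffMeasure_orthogonalProjectionOnto_le _ _ _ (Nat.cast_nonneg _)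

lemma hausdorffMeasure_image_lt_top_of_contDiff {G F : Type*}
    [NormedAddCommGroup G] [NormedSpace ℝ G] [FiniteDimensional ℝ G] [MeasurableSpace G]
    [BorelSpace G] [NormedAddCommGroup F] [NormedSpace ℝ F] [MeasurableSpace F] [BorelSpace F]
    {f : G → F} (hf : ContDiff ℝ 1 f) {K : Set G} (hK : IsCompact K) :
    μH[(finrank ℝ G : ℝ)] (f '' K) < ∞ := by
  obtain ⟨C, hC⟩ := hf.locallyLipschitz.locallyLipschitzOn.exists_lipschitzOnWith_of_compact hK
  calc μH[(finrank ℝ G : ℝ)] (f '' K) ≤ C ^ (finrank ℝ G : ℝ) * μH[(finrank ℝ G : ℝ)] K :=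
        hC.hausdorffMeasure_image_le (Nat.cast_nonneg _)
    _ < ∞ := by
        rw [ENNReal.rpow_natCast]
        exact ENNReal.mul_lt_top (ENNReal.pow_lt_top ENNReal.coe_lt_top) hK.measure_lt_top

lemma hausdorffMeasure_hemisphere_lt_top {v : E} (hv : ‖v‖ = 1) :
    μH[(finrank ℝ E : ℝ) - 1] {x ∈ sphere (0 : E) 1 | ⟪v, x⟫ ≤ 0} < ∞ := by
  set S : Set E := {x ∈ sphere (0 : E) 1 | ⟪v, x⟫ ≤ 0}
  have hS : IsCompact S :=
    (isCompact_sphere 0 1).inter_right (isClosed_le (innerSL ℝ v).continuous continuous_const)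
  have hSimage : S ⊆ (stereoInvFunAux v ∘ (ℝ ∙ v)ᗮ.subtypeL) '' (stereoToFun v '' S) := by
    intro x hx
    have hxv : x ≠ v := by
      rintro rfl
      have := hx.2
      rw [real_inner_self_eq_norm_sq, hv] at this
      norm_num at this
    exact ⟨_, ⟨x, hx, rfl⟩, congrArg Subtype.val (stereo_left_inv hv (x := ⟨x, hx.1⟩) hxv)⟩
  have hproj : ContinuousOn (stereoToFun v) S :=
    continuousOn_stereoToFun.mono fun x hx => (hx.2.trans_lt one_pos).ne
  rw [← natCast_finrank_orthogonal_span_singleton (norm_ne_zero_iff.1 (hv ▸ one_ne_zero))]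
  exact (measure_mono hSimage).trans_lt <| hausdorffMeasure_image_lt_top_of_contDiff
    (contDiff_stereoInvFunAux.comp (ℝ ∙ v)ᗮ.subtypeL.contDiff) (hS.image_of_continuousOn hproj)

theorem hausdorffMeasure_sphere_lt_top :
    μH[(finrank ℝ E : ℝ) - 1] (sphere (0 : E) 1) < ∞ := by
  obtain hE | ⟨v, hv⟩ := (sphere (0 : E) 1).eq_empty_or_nonempty
  · simp [hE]
  rw [mem_sphere_zero_iff_norm] at hv
  have hcover : sphere (0 : E) 1 ⊆
      {x ∈ sphere (0 : E) 1 | ⟪v, x⟫ ≤ 0} ∪ {x ∈ sphere (0 : E) 1 | ⟪-v, x⟫ ≤ 0} := by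
    intro x hx
    rcases le_total ⟪v, x⟫ 0 with h | h
    · exact Or.inl ⟨hx, h⟩
    · exact Or.inr ⟨hx, (inner_neg_left v x).trans_le (neg_nonpos.2 h)⟩
  exact (measure_mono hcover).trans_lt <| measure_union_lt_top
    (hausdorffMeasure_hemisphere_lt_top hv)
    (hausdorffMeasure_hemisphere_lt_top ((norm_neg v).trans hv))

instance : IsFiniteMeasure (surfaceMeasure E) :=
  isFiniteMeasure_restrict.2 hausdorffMeasure_sphere_lt_top.ne

instance [Nontrivial E] : NeZero (surfaceMeasure E) :=
  ⟨Measure.restrict_eq_zero.not.2 hausdorffMeasure_sphere_pos.ne'⟩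

end SurfaceMeasure

section PolarCoordinates

variable {E : Type*} [NormedAddCommGroup E] [NormedSpace ℝ E] [FiniteDimensional ℝ E]
  [Nontrivial E] [MeasurableSpace E] [BorelSpace E]

theorem lintegral_fun_norm_eq_toSphere_univ_mul (μ : Measure E) [μ.IsAddHaarMeasure]
    {f : ℝ → ℝ≥0∞} (hf : Measurable f) :
    ∫⁻ x, f ‖x‖ ∂μ =
      μ.toSphere Set.univ *
        ∫⁻ r in Set.Ioi (0 : ℝ), f r * ENNReal.ofReal (r ^ (finrank ℝ E - 1)) := by
  calc ∫⁻ x, f ‖x‖ ∂μ = ∫⁻ x : ({0}ᶜ : Set E), f ‖(x : E)‖ ∂μ.comap (↑) := by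
        rw [lintegral_subtype_comap (measurableSet_singleton _).compl fun x => f ‖x‖,
          restrict_compl_singleton]
    _ = ∫⁻ p, f p.2 ∂μ.toSphere.prod (.volumeIoiPow (finrank ℝ E - 1)) := by
        rw [← μ.measurePreserving_homeomorphUnitSphereProd.lintegral_comp (by fun_prop)]
        simp only [homeomorphUnitSphereProd_apply_snd_coe]
    _ = μ.toSphere Set.univ * ∫⁻ r : Set.Ioi (0 : ℝ), f r ∂.volumeIoiPow (finrank ℝ E - 1) := by
        rw [lintegral_prod (fun p : sphere (0 : E) 1 × Set.Ioi (0 : ℝ) => f p.2) (by fun_prop)]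
        simp only [lintegral_const, mul_comm]
    _ = _ := by
        rw [Measure.volumeIoiPow, lintegral_withDensity_eq_lintegral_mul _ (by fun_prop)
          (by fun_prop), ← lintegral_subtype_comap measurableSet_Ioi]
        simp only [Pi.mul_apply, mul_comm]

theorem map_norm_absolutelyContinuous (μ : Measure E) [μ.IsAddHaarMeasure] :
    μ.map norm ≪ volume := by
  refine Measure.AbsolutelyContinuous.mk fun A hA hA0 => ?_
  have hindicator : ∀ᵐ r : ℝ, A.indicator (1 : ℝ → ℝ≥0∞) r = 0 := by
    filter_upwards [measure_eq_zero_iff_ae_notMem.1 hA0] with r hr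
    exact Set.indicator_of_notMem hr _
  calc μ.map norm A = ∫⁻ x, A.indicator 1 ‖x‖ ∂μ := by
        rw [← lintegral_indicator_one hA,
          lintegral_map (measurable_one.indicator hA) measurable_norm]
    _ = μ.toSphere Set.univ * ∫⁻ r in Set.Ioi (0 : ℝ),
          A.indicator 1 r * ENNReal.ofReal (r ^ (finrank ℝ E - 1)) :=
        lintegral_fun_norm_eq_toSphere_univ_mul μ (measurable_one.indicator hA)
    _ = 0 := by
        rw [lintegral_congr_ae (g := 0), lintegral_zero_fun, mul_zero]
        filter_upwards [ae_restrict_of_ae hindicator] with r hr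
        rw [hr, zero_mul, Pi.zero_apply]

end PolarCoordinates

section PlancherelCriterion

variable {E : Type*} [NormedAddCommGroup E] [InnerProductSpace ℝ E] [FiniteDimensional ℝ E]

lemma exists_schwartzMap_indicator_le_enorm_le_indicator {K U : Set E} (hK : IsCompact K)
    (hU : IsOpen U) (hKU : K ⊆ U) :
    ∃ ψ : 𝓢(E, ℂ), ∀ x, ψ x = (‖ψ x‖ : ℂ) ∧
      ‖ψ x‖ₑ ∈ Set.Icc (K.indicator (1 : E → ℝ≥0∞) x) (U.indicator 1 x) := by
  obtain ⟨R, hKR⟩ := hK.isBounded.subset_ball 0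
  obtain ⟨f, hf, hf01, hfsupp, hfK⟩ := exists_contMDiff_support_eq_eq_one_iff (n := ⊤)
    (modelWithCornersSelf ℝ E) (hU.inter isOpen_ball) hK.isClosed (Set.subset_inter hKU hKR)
  have hf0 : ∀ x, 0 ≤ f x := fun x => (hf01 ⟨x, rfl⟩).1
  have hf1 : ∀ x, f x ≤ 1 := fun x => (hf01 ⟨x, rfl⟩).2
  have hfUR : ∀ x ∉ U ∩ ball 0 R, f x = 0 := fun x hx => Function.notMem_support.1 (hfsupp ▸ hx)
  have hfcompact : HasCompactSupport (Complex.ofRealCLM ∘ f) :=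
    (HasCompactSupport.intro (isCompact_closedBall (0 : E) R) fun x hx =>
      hfUR x fun hxUR => hx (ball_subset_closedBall hxUR.2)).comp_left (map_zero _)
  refine ⟨hfcompact.toSchwartzMap (Complex.ofRealCLM.contDiff.comp hf.contDiff), fun x => ?_⟩
  change (f x : ℂ) = (‖(f x : ℂ)‖ : ℂ) ∧ ‖(f x : ℂ)‖ₑ ∈ _
  rw [← ofReal_norm, Complex.norm_real, Real.norm_of_nonneg (hf0 x)]
  refine ⟨rfl, Set.indicator_apply_le' (fun hx => ?_) (fun _ => zero_le),
    Set.le_indicator_apply (fun _ => ENNReal.ofReal_le_one.2 (hf1 x)) (fun hx => ?_)⟩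
  · rw [(hfK x).1 hx, ENNReal.ofReal_one, Pi.one_apply]
  · rw [hfUR x fun hxUR => hx hxUR.1, ENNReal.ofReal_zero]

variable [MeasurableSpace E] [BorelSpace E]

lemma eLpNorm_two_fourier_schwartzMap (φ : 𝓢(E, ℂ)) :
    eLpNorm (𝓕 φ : 𝓢(E, ℂ)) 2 volume = eLpNorm φ 2 volume := by
  have h := SchwartzMap.norm_fourier_toL2_eq φ
  rw [SchwartzMap.norm_toLp, SchwartzMap.norm_toLp] at h
  exact (ENNReal.toReal_eq_toReal_iff' ((𝓕 φ : 𝓢(E, ℂ)).memLp 2 volume).eLpNorm_ne_top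
    (φ.memLp 2 volume).eLpNorm_ne_top).1 h

variable {ν : Measure E} [IsFiniteMeasure ν]

lemma integral_fourier_schwartzMap (φ : 𝓢(E, ℂ)) :
    ∫ x, (𝓕 φ : 𝓢(E, ℂ)) x ∂ν =
      ∫ ξ, φ ξ • VectorFourier.fourierIntegral 𝐞 ν (innerₗ E) (1 : E → ℂ) ξ := by
  have h := VectorFourier.integral_fourierIntegral_smul_eq_flip (μ := volume) (ν := ν)
    (L := innerₗ E) (f := φ) (g := (1 : E → ℂ)) Real.continuous_fourierChar
    (by exact continuous_inner) φ.integrable (integrable_const 1)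
  simp only [Pi.one_apply, smul_eq_mul, mul_one, flip_innerₗ] at h
  exact h

lemma enorm_integral_schwartzMap_le (ψ : 𝓢(E, ℂ)) :
    ‖∫ x, ψ x ∂ν‖ₑ ≤
      eLpNorm (VectorFourier.fourierIntegral 𝐞 ν (innerₗ E) (1 : E → ℂ)) 2 volume *
        eLpNorm ψ 2 volume := by
  set νhat := VectorFourier.fourierIntegral 𝐞 ν (innerₗ E) (1 : E → ℂ)
  have hνhat : Continuous νhat := VectorFourier.fourierIntegral_continuous
    Real.continuous_fourierChar (by exact continuous_inner) (integrable_const 1)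
  obtain ⟨φ, rfl⟩ : ∃ φ : 𝓢(E, ℂ), 𝓕 φ = ψ := ⟨𝓕⁻ ψ, by simp⟩
  calc ‖∫ x, (𝓕 φ : 𝓢(E, ℂ)) x ∂ν‖ₑ ≤ ∫⁻ ξ, ‖φ ξ • νhat ξ‖ₑ := by
        rw [integral_fourier_schwartzMap]
        exact enorm_integral_le_lintegral_enorm _
    _ = eLpNorm (⇑φ • νhat) 1 volume := eLpNorm_one_eq_lintegral_enorm.symm
    _ ≤ eLpNorm φ 2 volume * eLpNorm νhat 2 volume := eLpNorm_smul_le_mul_eLpNorm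
        hνhat.aestronglyMeasurable φ.continuous.aestronglyMeasurable
    _ = eLpNorm νhat 2 volume * eLpNorm (𝓕 φ : 𝓢(E, ℂ)) 2 volume := by
        rw [eLpNorm_two_fourier_schwartzMap, mul_comm]

lemma measure_le_eLpNorm_fourierIntegral_mul_of_isCompact {K U : Set E} (hK : IsCompact K)
    (hU : IsOpen U) (hKU : K ⊆ U) :
    ν K ≤ eLpNorm (VectorFourier.fourierIntegral 𝐞 ν (innerₗ E) (1 : E → ℂ)) 2 volume *
      volume U ^ (1 / 2 : ℝ) := by
  obtain ⟨ψ, hψ⟩ := exists_schwartzMap_indicator_le_enorm_le_indicator hK hU hKU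
  have hψint : ∫⁻ x, ‖ψ x‖ₑ ∂ν = ‖∫ x, ψ x ∂ν‖ₑ := by
    rw [integral_congr_ae (.of_forall fun x => (hψ x).1), integral_complex_ofReal,
      ← ofReal_norm, Complex.norm_real, Real.norm_of_nonneg (by positivity),
      ofReal_integral_norm_eq_lintegral_enorm ψ.integrable]
  have hψU : eLpNorm ψ 2 volume ≤ volume U ^ (1 / 2 : ℝ) := by
    calc eLpNorm ψ 2 volume ≤ eLpNorm (U.indicator fun _ => (1 : ℝ≥0∞)) 2 volume :=
          eLpNorm_mono_enorm fun x => (hψ x).2.2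
      _ = volume U ^ (1 / 2 : ℝ) := by
          rw [eLpNorm_indicator_const hU.measurableSet two_ne_zero
            ENNReal.ofNat_ne_top, enorm_eq_self, one_mul, ENNReal.toReal_ofNat]
  calc ν K = ∫⁻ x, K.indicator 1 x ∂ν := (lintegral_indicator_one hK.measurableSet).symm
    _ ≤ ∫⁻ x, ‖ψ x‖ₑ ∂ν := lintegral_mono fun x => (hψ x).2.1
    _ = ‖∫ x, ψ x ∂ν‖ₑ := hψint
    _ ≤ _ := enorm_integral_schwartzMap_le ψ
    _ ≤ _ := by gcongr

theorem absolutelyContinuous_of_eLpNorm_fourierIntegral_ne_top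
    (hν : eLpNorm (VectorFourier.fourierIntegral 𝐞 ν (innerₗ E) (1 : E → ℂ)) 2 volume ≠ ∞) :
    ν ≪ volume := by
  refine fun A hA => nonpos_iff_eq_zero.1 ?_
  set C := eLpNorm (VectorFourier.fourierIntegral 𝐞 ν (innerₗ E) (1 : E → ℂ)) 2 volume
  have hle : ∀ r : ℝ≥0∞, 0 < r → ν A ≤ C * r ^ (1 / 2 : ℝ) := by
    intro r hr
    obtain ⟨U, hAU, hU, hUr⟩ := A.exists_isOpen_lt_of_lt r (hA ▸ hr)
    calc ν A ≤ ν U := measure_mono hAU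
      _ = ⨆ (K) (_ : K ⊆ U) (_ : IsCompact K), ν K := hU.measure_eq_iSup_isCompact ν
      _ ≤ C * volume U ^ (1 / 2 : ℝ) := iSup_le fun K => iSup₂_le fun hKU hK =>
          measure_le_eLpNorm_fourierIntegral_mul_of_isCompact hK hU hKU
      _ ≤ C * r ^ (1 / 2 : ℝ) := by gcongr
  have hlim : Filter.Tendsto (fun r : ℝ≥0∞ => C * r ^ (1 / 2 : ℝ)) (nhdsWithin 0 (Set.Ioi 0))
      (nhds 0) := by
    have hcont : Continuous fun r : ℝ≥0∞ => C * r ^ (1 / 2 : ℝ) :=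
      (ENNReal.continuous_const_mul hν).comp ENNReal.continuous_rpow_const
    refine (hcont.tendsto' 0 0 ?_).mono_left nhdsWithin_le_nhds
    rw [ENNReal.zero_rpow_of_pos one_half_pos, mul_zero]
  exact ge_of_tendsto hlim (eventually_nhdsWithin_of_forall hle)

end PlancherelCriterion

section RadialSymmetrization

variable {E : Type*} [NormedAddCommGroup E] [InnerProductSpace ℝ E] [MeasurableSpace E]

/-- The law of `‖x‖ • ω` for `(x, ω)` distributed according to `ρ × σ`. When `σ` is a rotation
invariant measure on the unit sphere, this is, up to the factor `σ(E)`, the average of the images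
of `ρ` under rotations. -/
noncomputable def radialSymmetrization (ρ σ : Measure E) : Measure E :=
  (ρ.prod σ).map fun p => ‖p.1‖ • p.2

instance (ρ σ : Measure E) [IsFiniteMeasure ρ] [IsFiniteMeasure σ] :
    IsFiniteMeasure (radialSymmetrization ρ σ) := by
  unfold radialSymmetrization
  infer_instance

variable [BorelSpace E]

lemma charFun_eq_of_norm_eq {σ : Measure E} (hσ : ∀ e : E ≃ₗᵢ[ℝ] E, MeasurePreserving e σ σ)
    {ξ η : E} (h : ‖ξ‖ = ‖η‖) : charFun σ ξ = charFun σ η := by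
  obtain ⟨e, rfl⟩ : ∃ e : E ≃ₗᵢ[ℝ] E, e ξ = η := ⟨_, Submodule.reflection_sub h⟩
  rw [charFun_apply, charFun_apply]
  refine Eq.trans ?_ ((hσ e).integral_comp e.toHomeomorph.measurableEmbedding _)
  simp only [LinearIsometryEquiv.inner_map_map]

variable [SecondCountableTopology E]

lemma charFun_radialSymmetrization (ρ : Measure E) {σ : Measure E} [IsFiniteMeasure ρ]
    [IsFiniteMeasure σ] (hσ : ∀ e : E ≃ₗᵢ[ℝ] E, MeasurePreserving e σ σ) {ξ : E} {r : ℝ}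
    (hr : |r| = ‖ξ‖) :
    charFun (radialSymmetrization ρ σ) ξ = ∫ ω, charFun ρ (r • ω) ∂σ := by
  have hint : ∀ g : E × E → ℝ, Continuous g →
      Integrable (fun p => Complex.exp ((g p : ℂ) * Complex.I)) (ρ.prod σ) := fun g hg =>
    Integrable.of_bound (Continuous.aestronglyMeasurable (by fun_prop)) 1
      (.of_forall fun p => (Complex.norm_exp_ofReal_mul_I _).le)
  calc charFun (radialSymmetrization ρ σ) ξ
      = ∫ p, Complex.exp ((⟪‖p.1‖ • p.2, ξ⟫ : ℂ) * Complex.I) ∂ρ.prod σ := by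
        rw [charFun_apply, radialSymmetrization, integral_map (by fun_prop) (by fun_prop)]
    _ = ∫ x, charFun σ (‖x‖ • ξ) ∂ρ := by
        rw [integral_prod _ (hint _ (by fun_prop))]
        simp only [charFun_apply, real_inner_smul_left, real_inner_smul_right]
    _ = ∫ x, charFun σ (r • x) ∂ρ := by
        congr with x
        refine charFun_eq_of_norm_eq hσ ?_
        rw [norm_smul, norm_smul, norm_norm, Real.norm_eq_abs, hr, mul_comm]
    _ = ∫ x, ∫ ω, Complex.exp ((⟪x, r • ω⟫ : ℂ) * Complex.I) ∂σ ∂ρ := by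
        simp only [charFun_apply, real_inner_smul_right, real_inner_comm]
    _ = ∫ ω, charFun ρ (r • ω) ∂σ :=
        integral_integral_swap (hint (fun p => ⟪p.1, r • p.2⟫) (by fun_prop))

lemma map_norm_radialSymmetrization (ρ : Measure E) {σ : Measure E} [SFinite σ]
    (hσ : ∀ᵐ ω ∂σ, ‖ω‖ = 1) :
    (radialSymmetrization ρ σ).map norm = σ Set.univ • ρ.map norm := by
  have hnorm : (fun p : E × E => ‖‖p.1‖ • p.2‖) =ᵐ[ρ.prod σ] fun p => ‖p.1‖ := by
    filter_upwards [Measure.quasiMeasurePreserving_snd.ae hσ] with p hp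
    rw [norm_smul, norm_norm, hp, mul_one]
  calc (radialSymmetrization ρ σ).map norm
      = (ρ.prod σ).map fun p => ‖‖p.1‖ • p.2‖ := Measure.map_map measurable_norm (by fun_prop)
    _ = (ρ.prod σ).map fun p => ‖p.1‖ := Measure.map_congr hnorm
    _ = ((ρ.prod σ).map Prod.fst).map norm := (Measure.map_map measurable_norm measurable_fst).symm
    _ = σ Set.univ • ρ.map norm := by
        rw [Measure.map_fst_prod, Measure.map_smul]

lemma charFun_map_sub_prod (μ : Measure E) [IsFiniteMeasure μ] (ξ : E) :
    charFun ((μ.prod μ).map fun p => p.1 - p.2) ξ = (‖charFun μ ξ‖ ^ 2 : ℝ) := by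
  calc charFun ((μ.prod μ).map fun p => p.1 - p.2) ξ
      = ∫ p : E × E, Complex.exp ((⟪p.1, ξ⟫ : ℂ) * Complex.I) *
          Complex.exp ((⟪p.2, -ξ⟫ : ℂ) * Complex.I) ∂μ.prod μ := by
        rw [charFun_apply, integral_map (by fun_prop) (by fun_prop)]
        simp only [← Complex.exp_add, ← add_mul, ← Complex.ofReal_add, inner_neg_right,
          ← inner_neg_left, ← inner_add_left, ← sub_eq_add_neg]
    _ = charFun μ ξ * charFun μ (-ξ) :=
        integral_prod_mul (fun x => Complex.exp ((⟪x, ξ⟫ : ℂ) * Complex.I))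
          fun y => Complex.exp ((⟪y, -ξ⟫ : ℂ) * Complex.I)
    _ = (‖charFun μ ξ‖ ^ 2 : ℝ) := by
        rw [charFun_neg, Complex.mul_conj, Complex.normSq_eq_norm_sq]

end RadialSymmetrization

section MattilaIntegral

variable {E : Type*} [NormedAddCommGroup E] [InnerProductSpace ℝ E] [MeasurableSpace E]

lemma fourierIntegral_one_eq_charFun (μ : Measure E) (ξ : E) :
    VectorFourier.fourierIntegral 𝐞 μ (innerₗ E) (1 : E → ℂ) ξ =
      charFun μ ((-(2 * Real.pi)) • ξ) := by
  rw [charFun_eq_fourierIntegral', smul_smul, neg_mul_neg,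
    inv_mul_cancel₀ Real.two_pi_pos.ne', one_smul]

variable [BorelSpace E] [SecondCountableTopology E] {μ : Measure E} [IsFiniteMeasure μ]

lemma enorm_fourierIntegral_radialSymmetrization_le {σ : Measure E} [IsFiniteMeasure σ]
    (hσ : ∀ e : E ≃ₗᵢ[ℝ] E, MeasurePreserving e σ σ) (ξ : E) :
    ‖VectorFourier.fourierIntegral 𝐞
        (radialSymmetrization ((μ.prod μ).map fun p => p.1 - p.2) σ) (innerₗ E) (1 : E → ℂ) ξ‖ₑ ≤
      ∫⁻ ω, ‖VectorFourier.fourierIntegral 𝐞 μ (innerₗ E) (1 : E → ℂ) (‖ξ‖ • ω)‖ₑ ^ 2 ∂σ := by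
  have hr : |-(2 * Real.pi) * ‖ξ‖| = ‖(-(2 * Real.pi)) • ξ‖ := by
    rw [abs_mul, abs_norm, norm_smul, Real.norm_eq_abs]
  rw [fourierIntegral_one_eq_charFun, charFun_radialSymmetrization _ hσ hr]
  refine (enorm_integral_le_lintegral_enorm _).trans_eq (lintegral_congr fun ω => ?_)
  rw [fourierIntegral_one_eq_charFun, charFun_map_sub_prod, smul_smul, ← ofReal_norm,
    Complex.norm_real, Real.norm_of_nonneg (by positivity), ENNReal.ofReal_pow (norm_nonneg _),
    ofReal_norm]

variable [FiniteDimensional ℝ E] [Nontrivial E]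

lemma eLpNorm_fourierIntegral_radialSymmetrization_ne_top
    (hμ : ∫⁻ r in Set.Ioi (0 : ℝ),
        (∫⁻ ω, ‖VectorFourier.fourierIntegral 𝐞 μ (innerₗ E) (1 : E → ℂ) (r • ω)‖ₑ ^ 2
          ∂surfaceMeasure E) ^ 2 * ENNReal.ofReal (r ^ (finrank ℝ E - 1)) ≠ ∞) :
    eLpNorm (VectorFourier.fourierIntegral 𝐞
      (radialSymmetrization ((μ.prod μ).map fun p => p.1 - p.2) (surfaceMeasure E)) (innerₗ E)
      (1 : E → ℂ)) 2 volume ≠ ∞ := by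
  set μhat := VectorFourier.fourierIntegral 𝐞 μ (innerₗ E) (1 : E → ℂ)
  have hμhat : Continuous μhat := VectorFourier.fourierIntegral_continuous
    Real.continuous_fourierChar (by exact continuous_inner) (integrable_const 1)
  have hmeas : Measurable fun r : ℝ => ∫⁻ ω, ‖μhat (r • ω)‖ₑ ^ 2 ∂surfaceMeasure E :=
    Measurable.lintegral_prod_right' (f := fun p : ℝ × E => ‖μhat (p.1 • p.2)‖ₑ ^ 2)
      ((hμhat.comp continuous_smul).measurable.enorm.pow_const 2)
  rw [← lt_top_iff_ne_top, eLpNorm_lt_top_iff_lintegral_rpow_enorm_lt_top two_ne_zero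
    ENNReal.ofNat_ne_top]
  simp only [ENNReal.toReal_ofNat, ENNReal.rpow_ofNat]
  calc ∫⁻ ξ, ‖_‖ₑ ^ 2 ≤ ∫⁻ ξ : E, (∫⁻ ω, ‖μhat (‖ξ‖ • ω)‖ₑ ^ 2 ∂surfaceMeasure E) ^ 2 := by
        gcongr with ξ
        exact enorm_fourierIntegral_radialSymmetrization_le measurePreserving_surfaceMeasure ξ
    _ = _ := lintegral_fun_norm_eq_toSphere_univ_mul volume (hmeas.pow_const 2)
    _ < ∞ := ENNReal.mul_lt_top (measure_lt_top _ _) hμ.lt_top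

theorem map_dist_prod_absolutelyContinuous
    (hμ : ∫⁻ r in Set.Ioi (0 : ℝ),
        (∫⁻ ω, ‖VectorFourier.fourierIntegral 𝐞 μ (innerₗ E) (1 : E → ℂ) (r • ω)‖ₑ ^ 2
          ∂surfaceMeasure E) ^ 2 * ENNReal.ofReal (r ^ (finrank ℝ E - 1)) ≠ ∞) :
    (μ.prod μ).map (fun p => dist p.1 p.2) ≪ volume := by
  set ρ := (μ.prod μ).map fun p => p.1 - p.2
  have hρ : ρ.map norm = (μ.prod μ).map fun p => dist p.1 p.2 := by
    simp only [dist_eq_norm]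
    exact Measure.map_map measurable_norm (by fun_prop)
  have hac : radialSymmetrization ρ (surfaceMeasure E) ≪ volume :=
    absolutelyContinuous_of_eLpNorm_fourierIntegral_ne_top
      (eLpNorm_fourierIntegral_radialSymmetrization_ne_top hμ)
  have hnorm : surfaceMeasure E Set.univ • ρ.map norm ≪ volume := by
    rw [← map_norm_radialSymmetrization ρ ae_norm_eq_one_surfaceMeasure]
    exact (hac.map measurable_norm).trans (map_norm_absolutelyContinuous volume)
  rw [← hρ]
  exact (Measure.absolutelyContinuous_smul (NeZero.ne _)).trans hnorm

end MattilaIntegral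

lemma volume_image_dist_pos_of_map_absolutelyContinuous {X : Type*} [PseudoMetricSpace X]
    [MeasurableSpace X] [OpensMeasurableSpace X] [SecondCountableTopology X] {μ : Measure X}
    [SFinite μ] [NeZero μ] {E : Set X} (hE : ∀ᵐ x ∂μ, x ∈ E)
    (hμ : (μ.prod μ).map (fun p => dist p.1 p.2) ≪ volume) :
    0 < volume {t : ℝ | ∃ x ∈ E, ∃ y ∈ E, t = dist x y} := by
  refine pos_iff_ne_zero.2 fun h0 => ?_
  have hnot : ∀ᵐ p ∂μ.prod μ, dist p.1 p.2 ∉ {t : ℝ | ∃ x ∈ E, ∃ y ∈ E, t = dist x y} :=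
    ae_of_ae_map (f := fun p : X × X => dist p.1 p.2) (by fun_prop)
      (measure_eq_zero_iff_ae_notMem.1 (hμ h0))
  obtain ⟨x, hxE, hx⟩ := (hE.and (Measure.ae_ae_of_ae_prod hnot)).exists
  obtain ⟨y, hyE, hxy⟩ := (hE.and hx).exists
  exact hxy ⟨x, hxE, y, hyE, rfl⟩

lemma measureFT_eq_fourierIntegral {d : ℕ} (μ : Measure (EuclideanSpace ℝ (Fin d))) :
    measureFT μ = VectorFourier.fourierIntegral 𝐞 μ (innerₗ _) 1 := by
  ext ξ
  rw [fourierIntegral_one_eq_charFun, charFun_apply, measureFT]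
  simp only [real_inner_smul_right, neg_mul]

theorem mattila_integral_finite_implies_distance_set_pos_general
    (d : ℕ) (hd : 0 < d)
    (E : Set (EuclideanSpace ℝ (Fin d)))
    (μ : Measure (EuclideanSpace ℝ (Fin d))) [IsFiniteMeasure μ] [NeZero μ]
    (hsupp : μ Eᶜ = 0)
    (hM : ∫⁻ r in Set.Ioi (0 : ℝ),
        (∫⁻ ω in sphere (0 : EuclideanSpace ℝ (Fin d)) 1,
            (‖measureFT μ (r • ω)‖₊ : ℝ≥0∞) ^ 2 ∂μH[(d : ℝ) - 1]) ^ 2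
          * ENNReal.ofReal (r ^ (d - 1)) < ⊤) :
    0 < volume {t : ℝ | ∃ x ∈ E, ∃ y ∈ E, t = dist x y} := by
  have : NeZero d := ⟨hd.ne'⟩
  refine volume_image_dist_pos_of_map_absolutelyContinuous (mem_ae_iff.2 hsupp)
    (map_dist_prod_absolutelyContinuous ?_)
  rw [surfaceMeasure, finrank_euclideanSpace_fin, ← measureFT_eq_fourierIntegral]
  exact hM.ne

/-- **Mattila's criterion for the Falconer distance problem**: if `E ⊆ ℝ^d`, `d ≥ 2`,
is compact, `μ` is a Borel probability measure supported on `E`, and the Mattila integral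
`∫_0^∞ (∫_{S^{d-1}} |μ̂(rω)|² dσ(ω))² r^{d-1} dr` is finite (here the surface measure `σ`
on the unit sphere is the `(d-1)`-dimensional Hausdorff measure restricted to it), then the
distance set `Δ(E) = {|x-y| : x, y ∈ E}` has positive Lebesgue measure. -/
theorem mattila_integral_finite_implies_distance_set_pos
    (d : ℕ) (hd : 2 ≤ d)
    (E : Set (EuclideanSpace ℝ (Fin d))) (hE : IsCompact E)
    (μ : Measure (EuclideanSpace ℝ (Fin d))) [IsProbabilityMeasure μ]
    (hsupp : μ Eᶜ = 0)
    (hM : ∫⁻ r in Set.Ioi (0 : ℝ),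
        (∫⁻ ω in sphere (0 : EuclideanSpace ℝ (Fin d)) 1,
            (‖measureFT μ (r • ω)‖₊ : ℝ≥0∞) ^ 2 ∂μH[(d : ℝ) - 1]) ^ 2
          * ENNReal.ofReal (r ^ (d - 1)) < ⊤) :
    0 < volume {t : ℝ | ∃ x ∈ E, ∃ y ∈ E, t = dist x y} := by
  have : NeZero μ := ⟨IsProbabilityMeasure.ne_zero μ⟩
  exact mattila_integral_finite_implies_distance_set_pos_general d (by omega) E μ hsupp hM
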